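/- Let A be a unital C*-algebra, n,m ≥ 1, q ∈ ℂ with |q| < 1, and let v_1,…,v_{n+m} ∈ A satisfy the Cuntz–Toeplitz relations. With Q̃ = Σ_{i=1}^n v_i v_i*, w̃_r = v_{n+r}·((1−Q̃) + (1−|q|²)^{1/2} Q̃), and w_r = Σ_{k≥0} q^k Σ_{μ ∈ {1,…,n}^k} v_μ w̃_r v_μ* (a norm-convergent series), the topological closure of the *-subalgebra of A generated by {v_1,…,v_n, w_1,…,w_m} equals the topological closure of the *-subalgebra of A generated by {v_1,…,v_{n+m}}. -/

import Mathlib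

open scoped BigOperators

/-- Product `v_{μ_1} ⋯ v_{μ_k}` associated to a word `μ ∈ {1,…,n}^k`. -/
noncomputable def wordProd {A : Type*} [Monoid A] {n k : ℕ} (s : Fin n → A)
    (μ : Fin k → Fin n) : A :=
  (List.ofFn fun i => s (μ i)).prod

/-!
Put `Φ x = ∑ i, s i * x * star (s i)`, where `s` is the row `v_1, …, v_n`. The sum over words of
length `k` is `Φ ^ k`, so `w_r` is the Neumann series of `q • Φ` at `w̃_r`. Since `‖Φ‖ ≤ ‖Q̃‖ ≤ 1`,
the series converges and `w̃_r = w_r - q • Φ w_r`; as `Φ` preserves every closed *-subalgebra `S`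
containing the `s i`, such an `S` contains `w_r` if and only if it contains `w̃_r`. Finally `w̃_r`
differs from `v_{n+r}` by an invertible factor lying in `S`, whose inverse lies in `S` by spectral
permanence.
-/

theorem wordProd_cons {A : Type*} [Monoid A] {n k : ℕ} (s : Fin n → A) (i : Fin n)
    (μ : Fin k → Fin n) :
    wordProd s (Fin.cons i μ : Fin (k + 1) → Fin n) = s i * wordProd s μ := by
  simp [wordProd, List.ofFn_succ]

theorem range_eq_range_castAdd_union_range_natAdd {α : Type*} {n m : ℕ} (v : Fin (n + m) → α) :
    Set.range v =
      (Set.range fun i => v (Fin.castAdd m i)) ∪ Set.range fun r => v (Fin.natAdd n r) := by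
  rw [← finSumFinEquiv.surjective.range_comp v, ← Set.Sum.elim_range]
  congr 1
  ext (i | r) <;> simp

section NeumannSeries

variable {𝕜 E : Type*} [NontriviallyNormedField 𝕜] [NormedAddCommGroup E] [NormedSpace 𝕜 E]
  [CompleteSpace E] {T : E →L[𝕜] E}

theorem hasSum_pow_apply (hT : ‖T‖ < 1) (x : E) :
    HasSum (fun k => (T ^ k) x) ((∑' k, T ^ k) x) :=
  (ContinuousLinearMap.apply 𝕜 E x).hasSum (summable_geometric_of_norm_lt_one hT).hasSum

theorem tsum_pow_apply_sub_apply_tsum_pow_apply (hT : ‖T‖ < 1) (x : E) :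
    ∑' k, (T ^ k) x - T (∑' k, (T ^ k) x) = x := by
  rw [(hasSum_pow_apply hT x).tsum_eq]
  exact DFunLike.congr_fun (mul_neg_geom_series T hT) x

theorem tsum_pow_apply_mem_iff {σ : Type*} [SetLike σ E] [AddSubgroupClass σ E] {S : σ}
    (hS : IsClosed (S : Set E)) (hT : ‖T‖ < 1) (hTS : Set.MapsTo T S S) {x : E} :
    ∑' k, (T ^ k) x ∈ S ↔ x ∈ S := by
  refine ⟨fun hx => ?_, fun hx => ?_⟩
  · rw [← tsum_pow_apply_sub_apply_tsum_pow_apply hT x]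
    exact sub_mem hx (hTS hx)
  · have hpow (k : ℕ) : (T ^ k) x ∈ S := by
      rw [FunLike.coe_pow_eq_iterate]
      exact hTS.iterate k hx
    exact hS.mem_of_tendsto (hasSum_pow_apply hT x).summable.hasSum
      (.of_forall fun t => sum_mem fun k _ => hpow k)

end NeumannSeries

theorem topologicalClosure_adjoin_union_eq_of_forall_isClosed {R A : Type*} [CommSemiring R]
    [StarRing R] [TopologicalSpace A] [Semiring A] [Algebra R A] [StarRing A] [StarModule R A]
    [IsSemitopologicalSemiring A] [ContinuousStar A] {X Y Z : Set A}
    (h : ∀ S : StarSubalgebra R A, IsClosed (S : Set A) → X ⊆ S → (Y ⊆ S ↔ Z ⊆ S)) :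
    (StarAlgebra.adjoin R (X ∪ Y)).topologicalClosure =
      (StarAlgebra.adjoin R (X ∪ Z)).topologicalClosure := by
  have subset_closure (W : Set A) : W ⊆ (StarAlgebra.adjoin R W).topologicalClosure :=
    (StarAlgebra.subset_adjoin R W).trans (StarSubalgebra.le_topologicalClosure _)
  have closure_le {W : Set A} {S : StarSubalgebra R A} (hS : IsClosed (S : Set A)) (hW : W ⊆ S) :
      (StarAlgebra.adjoin R W).topologicalClosure ≤ S :=
    StarSubalgebra.topologicalClosure_minimal (StarAlgebra.adjoin_le hW) hS
  have closed (W : Set A) := (StarAlgebra.adjoin R W).isClosed_topologicalClosure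
  obtain ⟨hXY, hY⟩ := Set.union_subset_iff.1 (subset_closure (X ∪ Y))
  obtain ⟨hXZ, hZ⟩ := Set.union_subset_iff.1 (subset_closure (X ∪ Z))
  exact le_antisymm
    (closure_le (closed _) (Set.union_subset hXZ ((h _ (closed _) hXZ).2 hZ)))
    (closure_le (closed _) (Set.union_subset hXY ((h _ (closed _) hXY).1 hY)))

theorem isStarProjection_sum_mul_star {A ι : Type*} [Semiring A] [StarRing A] [Fintype ι]
    [DecidableEq ι] {s : ι → A} (hs : ∀ i j, star (s i) * s j = if i = j then 1 else 0) :
    IsStarProjection (∑ i, s i * star (s i)) where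
  isIdempotentElem := by
    have absorb (j : ι) : (∑ i, s i * star (s i)) * s j = s j := by
      simp [Finset.sum_mul, mul_assoc, hs]
    rw [IsIdempotentElem, Finset.mul_sum]
    simp only [← mul_assoc, absorb]
  isSelfAdjoint := isSelfAdjoint_sum _ fun i _ => .mul_star_self (s i)

section RowConj

variable {A ι : Type*} [NonUnitalCStarAlgebra A] [Fintype ι]

theorem sum_conjugate_le_norm_smul [PartialOrder A] [StarOrderedRing A] (s : ι → A) {a : A}
    (ha : IsSelfAdjoint a) :
    ∑ i, s i * a * star (s i) ≤ ‖a‖ • ∑ i, s i * star (s i) := by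
  rw [Finset.smul_sum]
  exact Finset.sum_le_sum fun i _ => CStarAlgebra.star_right_conjugate_le_norm_smul

theorem norm_sum_mul_star_sq_le (a b : ι → A) :
    ‖∑ i, a i * star (b i)‖ ^ 2 ≤ ‖∑ i, a i * star (a i)‖ * ‖∑ i, b i * star (b i)‖ := by
  let _ := CStarAlgebra.spectralOrder A
  have := CStarAlgebra.spectralOrderedRing A
  let toModule : (ι → A) → WithCStarModule A (ι → A) := (WithCStarModule.equiv A _).symm
  have norm_sq (c : ι → A) : ‖toModule c‖ ^ 2 = ‖∑ i, c i * star (c i)‖ :=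
    WithCStarModule.pi_norm_sq _
  rw [← norm_sq, ← norm_sq, mul_comm, ← mul_pow]
  gcongr
  exact CStarModule.norm_inner_le (A := A) (WithCStarModule A (ι → A))
    (x := toModule b) (y := toModule a)

/-- The completely positive map `x ↦ ∑ i, s i * x * star (s i)` attached to the row `s`,
bundled as a continuous linear map so that the sums over words in the letters `s i` are its
powers. -/
noncomputable def rowConj (s : ι → A) : A →L[ℂ] A :=
  ∑ i, ContinuousLinearMap.mulLeftRight ℂ A (s i) (star (s i))

theorem rowConj_apply (s : ι → A) (x : A) : rowConj s x = ∑ i, s i * x * star (s i) := by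
  simp [rowConj]

theorem norm_rowConj_le (s : ι → A) : ‖rowConj s‖ ≤ ‖∑ i, s i * star (s i)‖ := by
  let _ := CStarAlgebra.spectralOrder A
  have := CStarAlgebra.spectralOrderedRing A
  refine ContinuousLinearMap.opNorm_le_bound _ (norm_nonneg _) fun x => ?_
  have norm_row_mul_le :
      ‖∑ i, s i * x * star (s i * x)‖ ≤ ‖x‖ ^ 2 * ‖∑ i, s i * star (s i)‖ :=
    calc ‖∑ i, s i * x * star (s i * x)‖ = ‖∑ i, s i * (x * star x) * star (s i)‖ := by
          simp only [star_mul, mul_assoc]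
      _ ≤ ‖‖x * star x‖ • ∑ i, s i * star (s i)‖ :=
          CStarAlgebra.norm_le_norm_of_nonneg_of_le
            (Finset.sum_nonneg fun i _ => star_right_conjugate_nonneg (mul_star_self_nonneg x) _)
            (sum_conjugate_le_norm_smul s (.mul_star_self x))
      _ = ‖x‖ ^ 2 * ‖∑ i, s i * star (s i)‖ := by
          rw [norm_smul, norm_norm, CStarRing.norm_self_mul_star, sq]
  -- Cauchy–Schwarz: `rowConj s x` is the inner product of the rows `i ↦ s i * x` and `s`.
  refine le_of_sq_le_sq ?_ (by positivity)
  calc ‖rowConj s x‖ ^ 2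
      ≤ ‖∑ i, s i * x * star (s i * x)‖ * ‖∑ i, s i * star (s i)‖ := by
        rw [rowConj_apply]
        exact norm_sum_mul_star_sq_le (fun i => s i * x) s
    _ ≤ ‖x‖ ^ 2 * ‖∑ i, s i * star (s i)‖ * ‖∑ i, s i * star (s i)‖ := by gcongr
    _ = (‖∑ i, s i * star (s i)‖ * ‖x‖) ^ 2 := by ring

theorem mapsTo_rowConj {σ : Type*} [SetLike σ A] [NonUnitalSubsemiringClass σ A] [StarMemClass σ A]
    {s : ι → A} {S : σ} (hs : Set.range s ⊆ S) :
    Set.MapsTo (rowConj s) S S := fun x hx => by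
  rw [rowConj_apply]
  exact sum_mem fun i _ => mul_mem (mul_mem (hs ⟨i, rfl⟩) hx) (star_mem (hs ⟨i, rfl⟩))

end RowConj

section CStarAlgebra

variable {A : Type*} [CStarAlgebra A]

theorem mul_mem_cancel_right_of_isUnit {S : StarSubalgebra ℂ A} (hS : IsClosed (S : Set A))
    {u x : A} (hu : IsUnit u) (huS : u ∈ S) : x * u ∈ S ↔ x ∈ S := by
  lift u to S using huS
  obtain ⟨y, huy, -⟩ := isUnit_iff_exists.1 (S.coe_isUnit.1 hu)
  refine ⟨fun h => ?_, fun h => mul_mem h u.2⟩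
  have huy' : (u * y : A) = 1 := congrArg Subtype.val huy
  simpa [mul_assoc, huy'] using mul_mem h y.2

theorem isUnit_one_sub_add_smul [PartialOrder A] [StarOrderedRing A] {a : A} (ha₀ : 0 ≤ a)
    (ha₁ : a ≤ 1) {c : ℝ} (hc : 0 < c) : IsUnit (1 - a + c • a) := by
  refine CStarAlgebra.isUnit_of_le (min 1 c • 1 : A) ?_
    (isStrictlyPositive_one.smul (lt_min one_pos hc))
  calc (min 1 c • 1 : A) = min 1 c • (1 - a) + min 1 c • a := by rw [← smul_add, sub_add_cancel]
    _ ≤ (1 : ℝ) • (1 - a) + c • a := by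
      gcongr
      exacts [min_le_left 1 c, min_le_right 1 c]
    _ = 1 - a + c • a := by rw [one_smul]

theorem smul_rowConj_pow_apply {n : ℕ} (q : ℂ) (s : Fin n → A) (k : ℕ) (x : A) :
    ((q • rowConj s) ^ k) x =
      q ^ k • ∑ μ : Fin k → Fin n, wordProd s μ * x * star (wordProd s μ) := by
  induction k with
  | zero => simp [wordProd]
  | succ k ih =>
    rw [pow_succ', mul_apply_eq_comp, ih, smul_apply, map_smul, smul_smul, ← pow_succ',
      rowConj_apply, ← (Fin.consEquiv fun _ : Fin (k + 1) => Fin n).sum_comp,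
      Fintype.sum_prod_type]
    simp only [Fin.consEquiv, Equiv.coe_fn_mk, wordProd_cons, star_mul, Finset.mul_sum,
      Finset.sum_mul, mul_assoc]

theorem topologicalClosure_adjoin_range_union_range_tsum_rowConj_pow {ι κ : Type*}
    [Fintype ι] {q : ℂ} {s : ι → A} (hqs : ‖q • rowConj s‖ < 1) (t : κ → A) {u : A} (hu : IsUnit u)
    (hus : u ∈ (StarAlgebra.adjoin ℂ (Set.range s)).topologicalClosure) :
    (StarAlgebra.adjoin ℂ (Set.range s ∪
        Set.range fun r => ∑' k, ((q • rowConj s) ^ k) (t r * u))).topologicalClosure =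
      (StarAlgebra.adjoin ℂ (Set.range s ∪ Set.range t)).topologicalClosure := by
  refine topologicalClosure_adjoin_union_eq_of_forall_isClosed fun S hS hsS => ?_
  have huS : u ∈ S :=
    StarSubalgebra.topologicalClosure_minimal (StarAlgebra.adjoin_le hsS) hS hus
  have invariant : Set.MapsTo (q • rowConj s) S S := fun x hx =>
    SMulMemClass.smul_mem q (mapsTo_rowConj hsS hx)
  simp only [Set.range_subset_iff, SetLike.mem_coe, tsum_pow_apply_mem_iff hS hqs invariant,
    mul_mem_cancel_right_of_isUnit hS hu huS]

end CStarAlgebra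

theorem stmt_9_general {A κ : Type*} [CStarAlgebra A] {n : ℕ} (q : ℂ) (hq : ‖q‖ < 1)
    (s : Fin n → A) (Q : A) (hQ : Q = ∑ i, s i * star (s i)) (hQ₁ : ‖Q‖ ≤ 1)
    (t : κ → A) (c : ℝ) (hc : 0 < c)
    (wt : κ → A) (hwt : ∀ r, wt r = t r * ((1 - Q) + (c : ℂ) • Q))
    (f : κ → ℕ → A)
    (hf : ∀ r k, f r k =
      q ^ k • ∑ μ : Fin k → Fin n, wordProd s μ * wt r * star (wordProd s μ)) :
    (StarAlgebra.adjoin ℂ (Set.range s ∪ Set.range fun r => ∑' k, f r k)).topologicalClosure =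
      (StarAlgebra.adjoin ℂ (Set.range s ∪ Set.range t)).topologicalClosure := by
  let _ := CStarAlgebra.spectralOrder A
  have := CStarAlgebra.spectralOrderedRing A
  have hQ₀ : 0 ≤ Q := hQ ▸ Finset.sum_nonneg fun i _ => mul_star_self_nonneg (s i)
  have hunit : IsUnit (1 - Q + (c : ℂ) • Q) :=
    isUnit_one_sub_add_smul hQ₀ ((CStarAlgebra.norm_le_one_iff_of_nonneg Q).1 hQ₁) hc
  have hQs : Q ∈ StarAlgebra.adjoin ℂ (Set.range s) := by
    have hs (i) : s i ∈ StarAlgebra.adjoin ℂ (Set.range s) := StarAlgebra.subset_adjoin ℂ _ ⟨i, rfl⟩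
    exact hQ ▸ sum_mem fun i _ => mul_mem (hs i) (star_mem (hs i))
  have hnorm : ‖q • rowConj s‖ < 1 :=
    calc ‖q • rowConj s‖ ≤ ‖q‖ * 1 := by
          rw [norm_smul]
          gcongr
          exact (norm_rowConj_le s).trans (hQ ▸ hQ₁)
      _ < 1 := by rwa [mul_one]
  have hf' (r k) : f r k = ((q • rowConj s) ^ k) (t r * (1 - Q + (c : ℂ) • Q)) := by
    rw [hf, hwt, smul_rowConj_pow_apply]
  simp only [hf']
  exact topologicalClosure_adjoin_range_union_range_tsum_rowConj_pow hnorm t hunit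
    (StarSubalgebra.le_topologicalClosure _ (add_mem (sub_mem (one_mem _) hQs)
      (SMulMemClass.smul_mem _ hQs)))

theorem stmt_9 {A : Type*} [NormedRing A] [StarRing A] [CStarRing A]
    [NormedAlgebra ℂ A] [StarModule ℂ A] [CompleteSpace A]
    {n m : ℕ} (hn : 1 ≤ n) (hm : 1 ≤ m) (q : ℂ) (hq : ‖q‖ < 1)
    (v : Fin (n + m) → A)
    (hct : ∀ i j : Fin (n + m), star (v i) * v j = if i = j then 1 else 0)
    (Q : A) (hQ : Q = ∑ i : Fin n, v (Fin.castAdd m i) * star (v (Fin.castAdd m i)))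
    (wt : Fin m → A)
    (hwt : ∀ r, wt r = v (Fin.natAdd n r) *
      ((1 - Q) + ((Real.sqrt (1 - ‖q‖ ^ 2) : ℝ) : ℂ) • Q))
    (f : Fin m → ℕ → A)
    (hf : ∀ r k, f r k = q ^ k • ∑ μ : Fin k → Fin n,
      wordProd (fun i => v (Fin.castAdd m i)) μ * wt r *
        star (wordProd (fun i => v (Fin.castAdd m i)) μ)) :
    (StarAlgebra.adjoin ℂ
        ((Set.range fun i : Fin n => v (Fin.castAdd m i)) ∪
          (Set.range fun r : Fin m => ∑' k, f r k))).topologicalClosure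
      = (StarAlgebra.adjoin ℂ (Set.range v)).topologicalClosure := by
  let _ : CStarAlgebra A := { }
  rw [range_eq_range_castAdd_union_range_natAdd v]
  exact stmt_9_general q hq _ Q hQ
    (hQ ▸ (isStarProjection_sum_mul_star fun i j => by simp [hct]).norm_le) _ _
    (Real.sqrt_pos.2 (by nlinarith [norm_nonneg q])) wt hwt f hf
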